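/- Let n, N be positive integers. Let g₀ ∈ M_N(ℝ) be invertible, let v_1,…,v_n ∈ M_N(ℝ), and let α_{μν} ∈ M_N(ℝ) (1 ≤ μ, ν ≤ n) satisfy α_{μν} − α_{νμ} = −[v_μ, v_ν] for all μ, ν. Then there exists a smooth map g : ℝⁿ → M_N(ℝ) with g(x) invertible for every x, such that g(0) = g₀, ξ_μ(0) = v_μ for all μ, and ξ^{(2)}_{μν}(0) = α_{μν} for all μ, ν. (This expresses the surjectivity part of the identification J²(X,G) ≅ G × V₂, where V₂ is the affine subbundle of pairs (ξ, α) with Skew(α) = −½[ξ, ξ].) -/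

import Mathlib

/-!
Write `H μ ν = α μ ν + v μ * v ν`. The hypothesis on `α` says exactly that `H` is symmetric, so
there is a quadratic polynomial `Q` with `Q 0 = g₀`, first derivatives `v μ * g₀` and second
derivatives `H μ ν * g₀` at the origin (`fderiv_quad`). Invertibility of `Q` is only known near `0`;
precomposing it with the smooth map `x ↦ χ x • x`, for a bump function `χ` of small support,
keeps the 2-jet at `0` and forces all values to be invertible (`exists_squash`). Finally, the
product rule applied to `∂_μ g = ξ_μ * g` gives `H μ ν * g₀ = ∂_ν ξ_μ * g₀ + v μ * v ν * g₀`,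
that is `∂_ν ξ_μ = α μ ν` at the origin.
-/

/-- The partial derivative in the `μ`-th coordinate direction of a matrix-valued map on
`ℝⁿ`, taken entrywise. -/
noncomputable def pd {n N : ℕ} (μ : Fin n) (f : (Fin n → ℝ) → Matrix (Fin N) (Fin N) ℝ) :
    (Fin n → ℝ) → Matrix (Fin N) (Fin N) ℝ :=
  fun x => Matrix.of fun a b => fderiv ℝ (fun y => f y a b) x (Pi.single μ 1)

/-- A matrix-valued map on `ℝⁿ` is smooth iff each entry is `C^∞`. -/
def MSmooth {n N : ℕ} (f : (Fin n → ℝ) → Matrix (Fin N) (Fin N) ℝ) : Prop :=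
  ∀ a b, ContDiff ℝ (⊤ : ℕ∞) fun y => f y a b

/-- Iterated partial derivative `∂_{μ_1}⋯∂_{μ_j} f` for a tuple `[μ_1,…,μ_j]`
(`∂_{μ_j}` acts first, `∂_{μ_1}` last). -/
noncomputable def iterPD {n N : ℕ} :
    List (Fin n) → ((Fin n → ℝ) → Matrix (Fin N) (Fin N) ℝ) →
      ((Fin n → ℝ) → Matrix (Fin N) (Fin N) ℝ)
  | [], f => f
  | μ :: rest, f => pd μ (iterPD rest f)

/-- `ξ_{μ_1…μ_j}(x) = (∂_{μ_1}⋯∂_{μ_j} g)(x) · g(x)⁻¹`. -/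
noncomputable def xiTup {n N : ℕ} (g : (Fin n → ℝ) → Matrix (Fin N) (Fin N) ℝ)
    (μs : List (Fin n)) : (Fin n → ℝ) → Matrix (Fin N) (Fin N) ℝ :=
  fun x => iterPD μs g x * (g x)⁻¹

/-- The trivialized jet components, prepend convention: `ξ^{(1)}_μ = (∂_μ g)·g⁻¹` and
`ξ^{(j)}_{μ_1…μ_j} = ∂_{μ_1}(ξ^{(j−1)}_{μ_2…μ_j})` (the new differentiation index is
prepended, i.e. the head of the list is the outermost derivative). -/
noncomputable def xiJ {n N : ℕ} (g : (Fin n → ℝ) → Matrix (Fin N) (Fin N) ℝ) :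
    List (Fin n) → (Fin n → ℝ) → Matrix (Fin N) (Fin N) ℝ
  | [] => fun _ => 1
  | [μ] => fun x => pd μ g x * (g x)⁻¹
  | μ :: rest => pd μ (xiJ g rest)

/-- The ordered tuple `(μ_a)_{a ∈ κ}` with `κ` sorted increasingly. -/
def tupleOf {n : ℕ} (μ : ℕ → Fin n) (κ : Finset ℕ) : List (Fin n) :=
  (κ.sort (· ≤ ·)).map μ

/-- `ξ_{λ(μ_1…μ_j)} = ξ_{λ_1(μ_1…μ_j)} ⋯ ξ_{λ_l(μ_1…μ_j)}` (ordered matrix product). -/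
noncomputable def xiPart {n N : ℕ} (g : (Fin n → ℝ) → Matrix (Fin N) (Fin N) ℝ)
    (μ : ℕ → Fin n) (L : List (Finset ℕ)) (x : Fin n → ℝ) : Matrix (Fin N) (Fin N) ℝ :=
  (L.map fun A => xiTup g (tupleOf μ A) x).prod

/-- The matrix commutator `[A,B] = AB − BA`. -/
def mcomm {N : ℕ} (A B : Matrix (Fin N) (Fin N) ℝ) : Matrix (Fin N) (Fin N) ℝ :=
  A * B - B * A

/-- A partition of `{1,…,j}`: an ordered tuple of pairwise disjoint nonempty
subsets of `{1,…,j}` whose union is `{1,…,j}`. -/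
def IsPartitionOf (j : ℕ) (L : List (Finset ℕ)) : Prop :=
  (∀ A ∈ L, A.Nonempty) ∧ L.Pairwise Disjoint ∧ L.foldr (· ∪ ·) ∅ = Finset.Icc 1 j

/-- Membership in `P₁⁺(j)`: a partition of `{1,…,j}` whose first block contains `1`. -/
def IsP1Plus (j : ℕ) (L : List (Finset ℕ)) : Prop :=
  IsPartitionOf j L ∧ 1 ∈ L.headI

/-- Membership in `P^a(j)`: a partition of `{1,…,j}` that is anti-lexicographically
ordered, i.e. `max λ₁ < max λ₂ < … < max λ_l`. -/
def IsPAnti (j : ℕ) (L : List (Finset ℕ)) : Prop :=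
  IsPartitionOf j L ∧ (L.map fun A => A.sup id).Chain' (· < ·)

/-- `λ_{[s]}⁺` (for `1 ≤ s ≤ l`): adjoin `j+1` to the `s`-th block (1-indexed). -/
def plusOp (j : ℕ) (L : List (Finset ℕ)) (s : ℕ) : List (Finset ℕ) :=
  L.set (s - 1) (insert (j + 1) (L.getD (s - 1) ∅))

/-- `λ_{[s]}⁻` (for `1 ≤ s ≤ l`): insert the new singleton block `{j+1}` right after
the `s`-th block (1-indexed). -/
def minusOp (j : ℕ) (L : List (Finset ℕ)) (s : ℕ) : List (Finset ℕ) :=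
  L.take s ++ [{j + 1}] ++ L.drop s

/-- A smooth map that is the identity near the origin and takes values in a given neighbourhood
of the origin. -/
theorem exists_squash {n : ℕ} (U : Set (Fin n → ℝ)) (hU : U ∈ nhds (0 : Fin n → ℝ)) :
    ∃ ρ : (Fin n → ℝ) → (Fin n → ℝ), ContDiff ℝ (⊤ : ℕ∞) ρ ∧ (∀ x, ρ x ∈ U) ∧
      ∀ᶠ x in nhds 0, ρ x = x := by
  obtain ⟨r, hr, hrU⟩ := Metric.mem_nhds_iff.1 hU
  let f : ContDiffBump (0 : Fin n → ℝ) := ⟨r / 2, r, by positivity, by linarith⟩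
  refine ⟨fun x => f x • x, f.contDiff.smul contDiff_id, fun x => hrU ?_, ?_⟩
  · rw [mem_ball_zero_iff]
    by_cases hx : ‖x‖ < r
    · rw [norm_smul, Real.norm_of_nonneg f.nonneg]
      exact (mul_le_of_le_one_left (norm_nonneg _) f.le_one).trans_lt hx
    · have : f x = 0 := f.zero_of_le_dist (by simpa using hx)
      simpa [this] using hr
  · filter_upwards [f.eventuallyEq_one] with x hx
    simp [hx]

/-- The quadratic polynomial with constant term `c`, gradient `b` at the origin and (for symmetric
`h`) Hessian `h`. -/
noncomputable def quad {n : ℕ} (c : ℝ) (b : Fin n → ℝ) (h : Fin n → Fin n → ℝ)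
    (y : Fin n → ℝ) : ℝ :=
  c + ∑ i, y i * b i + 1 / 2 * ∑ i, ∑ j, y i * y j * h i j

theorem contDiff_quad {n : ℕ} (c : ℝ) (b : Fin n → ℝ) (h : Fin n → Fin n → ℝ) :
    ContDiff ℝ (⊤ : ℕ∞) (quad c b h) := by
  unfold quad
  fun_prop

theorem fderiv_linear {n : ℕ} (c : ℝ) (b : Fin n → ℝ) (y : Fin n → ℝ) (μ : Fin n) :
    fderiv ℝ (fun y : Fin n → ℝ => c + ∑ i, y i * b i) y (Pi.single μ 1) = b μ := by
  have H : HasFDerivAt (fun y : Fin n → ℝ => c + ∑ i, y i * b i)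
      (∑ i, b i • (ContinuousLinearMap.proj i : (Fin n → ℝ) →L[ℝ] ℝ)) y :=
    (HasFDerivAt.fun_sum fun i _ => (hasFDerivAt_apply i y).mul_const (b i)).const_add c
  rw [H.fderiv]
  simp [Pi.single_apply]

theorem fderiv_quad {n : ℕ} (c : ℝ) (b : Fin n → ℝ) (h : Fin n → Fin n → ℝ)
    (hs : ∀ i j, h i j = h j i) (y : Fin n → ℝ) (μ : Fin n) :
    fderiv ℝ (quad c b h) y (Pi.single μ 1) = b μ + ∑ j, y j * h μ j := by
  have hp : ∀ i, HasFDerivAt (fun y : Fin n → ℝ => y i)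
      (ContinuousLinearMap.proj i : (Fin n → ℝ) →L[ℝ] ℝ) y := fun i => hasFDerivAt_apply i y
  have H : HasFDerivAt (quad c b h) _ y :=
    ((HasFDerivAt.fun_sum fun i _ => (hp i).mul_const (b i)).const_add c).add
      ((HasFDerivAt.fun_sum fun i (_ : i ∈ Finset.univ) =>
        HasFDerivAt.fun_sum fun j (_ : j ∈ Finset.univ) =>
        ((hp i).fun_mul (hp j)).mul_const (h i j)).const_mul (1 / 2))
  rw [H.fderiv]
  simp [Pi.single_apply, Finset.sum_add_distrib]
  have e : ∑ i, h i μ * y i = ∑ i, y i * h μ i :=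
    Finset.sum_congr rfl fun i _ => by rw [hs i μ, mul_comm]
  have e' : ∑ i, h μ i * y i = ∑ i, y i * h μ i :=
    Finset.sum_congr rfl fun i _ => mul_comm _ _
  rw [e, e']
  ring

theorem pd_congr {n N : ℕ} {f g : (Fin n → ℝ) → Matrix (Fin N) (Fin N) ℝ} {x : Fin n → ℝ}
    (h : f =ᶠ[nhds x] g) (μ : Fin n) : pd μ f x = pd μ g x := by
  ext a b
  have : (fun y => f y a b) =ᶠ[nhds x] fun y => g y a b := h.mono fun y hy => by simp only [hy]
  simp only [pd, Matrix.of_apply, this.fderiv_eq]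

theorem pd_mul {n N : ℕ} {f g : (Fin n → ℝ) → Matrix (Fin N) (Fin N) ℝ} {x : Fin n → ℝ}
    (hf : ∀ a b, DifferentiableAt ℝ (fun y => f y a b) x)
    (hg : ∀ a b, DifferentiableAt ℝ (fun y => g y a b) x) (μ : Fin n) :
    pd μ (fun y => f y * g y) x = pd μ f x * g x + f x * pd μ g x := by
  ext a b
  have H : HasFDerivAt (fun y => (f y * g y) a b) _ x :=
    HasFDerivAt.fun_sum fun k (_ : k ∈ Finset.univ) =>
      (hf a k).hasFDerivAt.mul (hg k b).hasFDerivAt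
  simp only [pd, Matrix.of_apply, Matrix.add_apply, Matrix.mul_apply] at H ⊢
  rw [H.fderiv]
  simp [Finset.sum_add_distrib]
  rw [add_comm]
  congr 1
  exact Finset.sum_congr rfl fun k _ => mul_comm _ _

theorem MSmooth.det {n N : ℕ} {f : (Fin n → ℝ) → Matrix (Fin N) (Fin N) ℝ} (hf : MSmooth f) :
    ContDiff ℝ (⊤ : ℕ∞) fun y => (f y).det := by
  simp only [Matrix.det_apply']
  exact ContDiff.sum fun σ _ => contDiff_const.mul (contDiff_prod fun i _ => hf _ _)

theorem MSmooth.mul {n N : ℕ} {f g : (Fin n → ℝ) → Matrix (Fin N) (Fin N) ℝ} (hf : MSmooth f)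
    (hg : MSmooth g) : MSmooth fun y => f y * g y := by
  intro a b
  simp only [Matrix.mul_apply]
  exact ContDiff.sum fun k _ => (hf a k).mul (hg k b)

theorem MSmooth.pd {n N : ℕ} {f : (Fin n → ℝ) → Matrix (Fin N) (Fin N) ℝ} (hf : MSmooth f)
    (μ : Fin n) : MSmooth (pd μ f) := fun a b =>
  ((hf a b).fderiv_right (m := (⊤ : ℕ∞)) (by simp)).clm_apply contDiff_const

/-- By Cramer's rule, the pointwise inverse of a smooth family of invertible matrices is
smooth. -/
theorem MSmooth.inv {n N : ℕ} {f : (Fin n → ℝ) → Matrix (Fin N) (Fin N) ℝ} (hf : MSmooth f)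
    (hu : ∀ x, IsUnit (f x)) : MSmooth fun y => (f y)⁻¹ := by
  intro a b
  have hd : ∀ x, (f x).det ≠ 0 := fun x => ((Matrix.isUnit_iff_isUnit_det _).1 (hu x)).ne_zero
  simp only [Matrix.inv_def, Ring.inverse_eq_inv', Matrix.smul_apply, smul_eq_mul,
    Matrix.adjugate_apply]
  refine (hf.det.inv hd).mul (MSmooth.det fun i j => ?_)
  -- The adjugate entry is a determinant whose row `b` has been replaced by a constant row.
  by_cases h : i = b
  · subst h
    simpa using contDiff_const
  · simpa [Matrix.updateRow_ne h] using hf i j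

/-- surjectivity part of the identification `J²(X,G) ≅ G × V₂`: given an
invertible `g₀ ∈ M_N(ℝ)`, matrices `v_μ` and matrices `α_{μν}` with
`α_{μν} − α_{νμ} = −[v_μ, v_ν]`, there is a smooth map `g : ℝⁿ → M_N(ℝ)`, invertible at
every point, with `g(0) = g₀`, `ξ_μ(0) = v_μ` and `ξ^{(2)}_{μν}(0) = α_{μν}` for all
`μ, ν`, where `ξ_μ = (∂_μ g)·g⁻¹` and `ξ^{(2)}_{μν} = ∂_ν ξ_μ`. -/
theorem second_jet_surjective (n N : ℕ) (hn : 1 ≤ n) (hN : 1 ≤ N)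
    (g₀ : Matrix (Fin N) (Fin N) ℝ) (hg₀ : IsUnit g₀)
    (v : Fin n → Matrix (Fin N) (Fin N) ℝ)
    (α : Fin n → Fin n → Matrix (Fin N) (Fin N) ℝ)
    (hα : ∀ μ ν, α μ ν - α ν μ = -mcomm (v μ) (v ν)) :
    ∃ g : (Fin n → ℝ) → Matrix (Fin N) (Fin N) ℝ,
      MSmooth g ∧ (∀ x, IsUnit (g x)) ∧ g 0 = g₀ ∧
      (∀ μ, pd μ g 0 * (g 0)⁻¹ = v μ) ∧
      (∀ μ ν, pd ν (fun y => pd μ g y * (g y)⁻¹) 0 = α μ ν) := by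
  let H : Fin n → Fin n → Matrix (Fin N) (Fin N) ℝ := fun μ ν => α μ ν + v μ * v ν
  have hH : ∀ μ ν, H μ ν = H ν μ := fun μ ν => by
    have h := hα μ ν
    rw [mcomm, neg_sub, sub_eq_sub_iff_add_eq_add] at h
    simpa only [H, add_comm] using h
  let Q : (Fin n → ℝ) → Matrix (Fin N) (Fin N) ℝ := fun y => Matrix.of fun a b =>
    quad (g₀ a b) (fun μ => (v μ * g₀) a b) (fun μ ν => (H μ ν * g₀) a b) y
  have hQ : MSmooth Q := fun a b => contDiff_quad _ _ _
  have hQ0 : Q 0 = g₀ := by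
    ext a b
    simp [Q, quad]
  have hdet : {y | (Q y).det ≠ 0} ∈ nhds (0 : Fin n → ℝ) :=
    hQ.det.continuous.continuousAt.eventually_ne
      (by rw [hQ0]; exact ((Matrix.isUnit_iff_isUnit_det _).1 hg₀).ne_zero)
  obtain ⟨ρ, hρ, hρU, hρ0⟩ := exists_squash _ hdet
  let g : (Fin n → ℝ) → Matrix (Fin N) (Fin N) ℝ := fun x => Q (ρ x)
  have hg : MSmooth g := fun a b => (hQ a b).comp hρ
  have hu : ∀ x, IsUnit (g x) := fun x => (Matrix.isUnit_iff_isUnit_det _).2 (hρU x).isUnit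
  have hgQ : g =ᶠ[nhds 0] Q := hρ0.mono fun x hx => by simp only [g, hx]
  have hg0 : g 0 = g₀ := hgQ.eq_of_nhds.trans hQ0
  have hdQ : ∀ μ, pd μ Q = fun y => Matrix.of fun a b =>
      (v μ * g₀) a b + ∑ ν, y ν * (H μ ν * g₀) a b := fun μ => by
    ext y a b
    exact fderiv_quad _ _ _ (fun i j => by rw [hH i j]) y μ
  have hd : ∀ μ, pd μ g 0 = v μ * g₀ := fun μ => by
    rw [pd_congr hgQ, hdQ]
    ext a b
    simp
  -- A second derivative needs the first derivatives on a neighbourhood of `0`, not only at `0`.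
  have hdd : ∀ μ ν, pd ν (pd μ g) 0 = H μ ν * g₀ := fun μ ν => by
    have h : pd μ g =ᶠ[nhds 0] pd μ Q := hgQ.eventuallyEq_nhds.mono fun x hx => pd_congr hx μ
    rw [pd_congr h, hdQ]
    ext a b
    exact fderiv_linear _ _ _ _
  have hmul : ∀ A : Matrix (Fin N) (Fin N) ℝ, A * g₀ * g₀⁻¹ = A := fun A =>
    Matrix.mul_nonsing_inv_cancel_right _ _ ((Matrix.isUnit_iff_isUnit_det _).1 hg₀)
  have hv : ∀ μ, pd μ g 0 * (g 0)⁻¹ = v μ := fun μ => by rw [hd, hg0, hmul]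
  refine ⟨g, hg, hu, hg0, hv, fun μ ν => ?_⟩
  have hξ : MSmooth fun y => pd μ g y * (g y)⁻¹ := (hg.pd μ).mul (hg.inv hu)
  -- Differentiating `∂_μ g = ξ_μ * g` avoids any formula for the derivative of `g⁻¹`.
  have key := pd_mul (x := 0) (fun a b => (hξ a b).differentiable (by simp) 0)
    (fun a b => (hg a b).differentiable (by simp) 0) ν
  have e : (fun y => pd μ g y * (g y)⁻¹ * g y) = pd μ g := funext fun y =>
    Matrix.nonsing_inv_mul_cancel_right _ _ ((Matrix.isUnit_iff_isUnit_det _).1 (hu y))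
  rw [e, hdd, hv, hd, hg0, ← mul_assoc, ← add_mul] at key
  have key' := congrArg (· * g₀⁻¹) key
  simp only [hmul] at key'
  exact (add_right_cancel key').symm
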